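/- Let F be a field, let a ≥ b ≥ 2, let t₁, t₂ ∈ F be nonzero, and set e₁ = t₁ + t₂, e₂ = t₁t₂. Let P = F[x₀,…,x_a, y₀,…,y_b] and let I_e = I₂(MX) + I₂(MY) + J_e. Then the F-vector space P/(I_e + (x₀, x_a − y₀, y_b)) has dimension exactly 2(a+b). -/

import Mathlib

open MvPolynomial

noncomputable section

/-- The polynomial ring `F[x₀,…,x_a, y₀,…,y_b]`. -/
abbrev KPoly (F : Type*) [CommRing F] (a b : ℕ) : Type _ :=
  MvPolynomial (Fin (a + 1) ⊕ Fin (b + 1)) F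

variable (F : Type*) [CommRing F] (a b : ℕ)

/-- The variable `x_i`. -/
def xv (i : Fin (a + 1)) : KPoly F a b := X (Sum.inl i)

/-- The variable `y_j`. -/
def yv (j : Fin (b + 1)) : KPoly F a b := X (Sum.inr j)

/-- The ideal generated by the 2×2 minors of the matrix `MX` with rows
`(x₀,…,x_{a−1})` and `(x₁,…,x_a)`. -/
def I2MX : Ideal (KPoly F a b) :=
  Ideal.span { f | ∃ c c' : Fin a,
    f = xv F a b c.castSucc * xv F a b c'.succ - xv F a b c'.castSucc * xv F a b c.succ }

/-- The ideal generated by the 2×2 minors of the matrix `MY` with rows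
`(y₀,…,y_{b−1})` and `(y₁,…,y_b)`. -/
def I2MY : Ideal (KPoly F a b) :=
  Ideal.span { f | ∃ c c' : Fin b,
    f = yv F a b c.castSucc * yv F a b c'.succ - yv F a b c'.castSucc * yv F a b c.succ }

/-- The first row `(x₀,…,x_{a−1}, y₀,…,y_{b−1})` of the matrix `M_t`. -/
def mrow1 : Fin a ⊕ Fin b → KPoly F a b
  | Sum.inl c => xv F a b c.castSucc
  | Sum.inr c => yv F a b c.castSucc

/-- The second row `(x₁,…,x_a, t·y₁,…,t·y_b)` of the matrix `M_t`. -/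
def mrow2 (t : F) : Fin a ⊕ Fin b → KPoly F a b
  | Sum.inl c => xv F a b c.succ
  | Sum.inr c => C t * yv F a b c.succ

/-- The ideal generated by the 2×2 minors of the matrix `M_t`. -/
def I2M (t : F) : Ideal (KPoly F a b) :=
  Ideal.span { f | ∃ c c' : Fin a ⊕ Fin b,
    f = mrow1 F a b c * mrow2 F a b t c' - mrow1 F a b c' * mrow2 F a b t c }

/-- The ideal `J_e` generated by the bilinear forms
`Q_{i,j} = x_{i+2}y_j − e₁x_{i+1}y_{j+1} + e₂x_iy_{j+2}`. -/
def Je (e1 e2 : F) : Ideal (KPoly F a b) :=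
  Ideal.span { f | ∃ i j : ℕ, ∃ _ : i + 2 ≤ a, ∃ _ : j + 2 ≤ b,
    f = xv F a b ⟨i + 2, by omega⟩ * yv F a b ⟨j, by omega⟩
      - C e1 * (xv F a b ⟨i + 1, by omega⟩ * yv F a b ⟨j + 1, by omega⟩)
      + C e2 * (xv F a b ⟨i, by omega⟩ * yv F a b ⟨j + 2, by omega⟩) }

/-! By the relations, every product of a basis monomial with a variable is a combination of `1`,
the variables `x₁,…,x_a, y₁,…,y_{b−1}`, the quadratic monomials `x_i y_{b−1}` and `x₁ y_j`, and
the single cubic `x₁ y₀ y_{b−1}`; these `2(a + b)` monomials therefore span the quotient.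

For their independence, modulo the minors and `x_a − y₀` the variables are parametrized by
`x_i = z uⁱ v^{a−i}` and `y_j = z u^{a+j}`. The functional sending `z³ u^{2a+b} vᵏ` to the Lucas
number with index `a − k` kills the multiples of `Q_{i,j}` by the Lucas recurrence, and those of
`x₀` and `y_b` because the Lucas sequence starts with `0`. It induces a functional on the quotient
that pairs the monomials of degree at most one perfectly with those of degree at least two.
-/

section Pairing

theorem linearIndependent_sumElim_of_pairing {R A ι : Type*} [CommRing R] [CommRing A]
    [Algebra R A] [DecidableEq ι] (τ : A →ₗ[R] R) {u v : ι → A}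
    (huu : ∀ i j, τ (u i * u j) = 0) (hvv : ∀ i j, τ (v i * v j) = 0)
    (huv : ∀ i j, τ (u i * v j) = if i = j then 1 else 0) :
    LinearIndependent R (Sum.elim u v) := by
  refine LinearIndependent.of_pairwise_dual_eq_zero_one _
    (fun i => τ ∘ₗ LinearMap.mul R A (Sum.elim v u i)) ?_ ?_
  · rintro (i | i) (j | j) hij
    · have hji : j ≠ i := fun h => hij (congrArg _ h.symm)
      simp [mul_comm, huv, hji]
    · simp [hvv]
    · simp [huu]
    · have hij' : i ≠ j := fun h => hij (congrArg _ h)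
      simp [huv, hij']
  · rintro (i | i) <;> simp [mul_comm, huv]

theorem span_eq_top_of_mul_mem {R A : Type*} [CommSemiring R] [Semiring A] [Algebra R A]
    {s t : Set A} (hs : Algebra.adjoin R s = ⊤) (one_mem : 1 ∈ Submodule.span R t)
    (mul_mem : ∀ p ∈ t, ∀ g ∈ s, p * g ∈ Submodule.span R t) : Submodule.span R t = ⊤ := by
  have mul_gen_mem : ∀ g ∈ s, ∀ p ∈ Submodule.span R t, p * g ∈ Submodule.span R t :=
    fun g hg => Submodule.span_le (p := (Submodule.span R t).comap (LinearMap.mulRight R g)).2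
      fun p hp => mul_mem p hp g hg
  have mul_adjoin_mem : ∀ c ∈ Algebra.adjoin R s, ∀ p ∈ Submodule.span R t,
      p * c ∈ Submodule.span R t := by
    intro c hc
    induction hc using Algebra.adjoin_induction with
    | mem g hg => exact mul_gen_mem g hg
    | algebraMap r =>
      intro p hp
      rw [← Algebra.commutes, ← Algebra.smul_def]
      exact Submodule.smul_mem _ r hp
    | add c d _ _ hc hd => intro p hp; rw [mul_add]; exact add_mem (hc p hp) (hd p hp)
    | mul c d _ _ hc hd => intro p hp; rw [← mul_assoc]; exact hd _ (hc p hp)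
  refine Submodule.eq_top_iff'.2 fun c => ?_
  rw [← one_mul c]
  exact mul_adjoin_mem c (hs ▸ Algebra.mem_top) 1 one_mem

/-- The largest ideal contained in the kernel of a linear map on an algebra. -/
def kernelIdeal {R A M : Type*} [CommSemiring R] [CommSemiring A] [Algebra R A] [AddCommMonoid M]
    [Module R M] (f : A →ₗ[R] M) : Ideal A where
  carrier := {g | ∀ p, f (p * g) = 0}
  add_mem' hg hg' p := by rw [mul_add, map_add, hg, hg', add_zero]
  zero_mem' p := by rw [mul_zero, map_zero]
  smul_mem' c g hg p := by rw [smul_eq_mul, ← mul_assoc, hg]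

/-- The linear map on the quotient by an ideal that is induced by a linear map vanishing on it. -/
def kernelIdealLift {R A M : Type*} [CommRing R] [CommRing A] [Algebra R A] [AddCommGroup M]
    [Module R M] (f : A →ₗ[R] M) (I : Ideal A) (h : I ≤ kernelIdeal f) : A ⧸ I →ₗ[R] M :=
  (I.restrictScalars R).liftQ f
      (fun g hg => LinearMap.mem_ker.2 (by simpa only [one_mul] using h hg 1)) ∘ₗ
    (Submodule.Quotient.restrictScalarsEquiv R I).symm.toLinearMap

theorem kernelIdealLift_mk {R A M : Type*} [CommRing R] [CommRing A] [Algebra R A]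
    [AddCommGroup M] [Module R M] (f : A →ₗ[R] M) (I : Ideal A) (h : I ≤ kernelIdeal f) (p : A) :
    kernelIdealLift f I h (Ideal.Quotient.mk I p) = f p :=
  rfl

theorem ker_le_kernelIdeal_comp {R A B M : Type*} [CommSemiring R] [CommSemiring A] [Algebra R A]
    [Semiring B] [Algebra R B] [AddCommMonoid M] [Module R M] (f : B →ₗ[R] M) (φ : A →ₐ[R] B) :
    RingHom.ker φ ≤ kernelIdeal (f ∘ₗ φ.toLinearMap) := by
  intro g hg p
  rw [LinearMap.comp_apply, AlgHom.toLinearMap_apply, map_mul, RingHom.mem_ker.1 hg, mul_zero,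
    map_zero]

theorem mem_kernelIdeal_of_monomial {R σ M : Type*} [CommSemiring R] [AddCommMonoid M]
    [Module R M] {f : MvPolynomial σ R →ₗ[R] M} {g : MvPolynomial σ R}
    (h : ∀ m, f (monomial m 1 * g) = 0) : g ∈ kernelIdeal f := by
  intro p
  induction p using MvPolynomial.induction_on' with
  | monomial m c =>
    have hmc : monomial m c = c • monomial m (1 : R) := by
      rw [smul_monomial, smul_eq_mul, mul_one]
    rw [hmc, smul_mul_assoc, map_smul, h, smul_zero]
  | add p q hp hq => rw [add_mul, map_add, hp, hq, add_zero]

end Pairing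

section Relations

variable {R A : Type*} [CommRing R] [CommRing A] [Algebra R A] {a b : ℕ} {e1 e2 : R}
  {x y : ℕ → A}

theorem mul_eq_mul_of_minors {M : Type*} [CommSemigroup M] {x : ℕ → M} {n : ℕ}
    (hx : ∀ i j, i < n → j < n → x i * x (j + 1) = x j * x (i + 1)) {i j k l : ℕ}
    (h : i + j = k + l) (hi : i ≤ n) (hj : j ≤ n) (hk : k ≤ n) (hl : l ≤ n) :
    x i * x j = x k * x l := by
  wlog hik : i ≤ k generalizing i j k l
  · exact (this h.symm hk hl hi hj (le_of_not_ge hik)).symm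
  obtain ⟨d, rfl⟩ := Nat.exists_eq_add_of_le hik
  induction d generalizing i j with
  | zero => rw [show j = l by omega, add_zero]
  | succ d ih =>
    obtain ⟨j, rfl⟩ : ∃ j', j = j' + 1 := ⟨j - 1, by omega⟩
    rw [hx i j (by omega) (by omega), mul_comm,
      ih (i := i + 1) (by omega) (by omega) (by omega) (by omega) (by omega),
      Nat.add_right_comm, Nat.add_assoc]

theorem mem_of_diagonal_recurrence {M : Type*} [AddCommGroup M] [Module R M] {N : Submodule R M}
    {f : ℕ → ℕ → M}
    (hf : ∀ i j, i + 2 ≤ a → j + 2 ≤ b →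
      f (i + 2) j = e1 • f (i + 1) (j + 1) - e2 • f i (j + 2))
    (hN : ∀ i j, i ≤ a → j ≤ b → i ≤ 1 ∨ b ≤ j + 1 → f i j ∈ N)
    {i j : ℕ} (hi : i ≤ a) (hj : j ≤ b) : f i j ∈ N := by
  induction i using Nat.strong_induction_on generalizing j with
  | _ i ih =>
    by_cases hij : i ≤ 1 ∨ b ≤ j + 1
    · exact hN i j hi hj hij
    obtain ⟨i, rfl⟩ : ∃ i', i = i' + 2 := ⟨i - 2, by omega⟩
    rw [hf i j hi (by omega)]
    exact sub_mem (N.smul_mem _ (ih (i + 1) (by omega) (by omega) (by omega)))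
      (N.smul_mem _ (ih i (by omega) (by omega) (by omega)))

variable (a b e1 e2 x y) in
/-- The relations of `P/(I_e + (x₀, x_a − y₀, y_b))`, for elements `x₀,…,x_a, y₀,…,y_b` of an
arbitrary algebra. Only these values of the sequences `x` and `y` are constrained. -/
structure ReductionRelations : Prop where
  x_minor : ∀ i j, i < a → j < a → x i * x (j + 1) = x j * x (i + 1)
  y_minor : ∀ i j, i < b → j < b → y i * y (j + 1) = y j * y (i + 1)
  bilinear : ∀ i j, i + 2 ≤ a → j + 2 ≤ b →
    x (i + 2) * y j = e1 • (x (i + 1) * y (j + 1)) - e2 • (x i * y (j + 2))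
  x_zero : x 0 = 0
  y_last : y b = 0
  x_last : x a = y 0

/-- The index set of the variables surviving in the quotient, together with `none` for the
constant `1`: there are `a` variables `x₁,…,x_a` and `b - 1` variables `y₁,…,y_{b−1}`. -/
abbrev ReductionIndex (a b : ℕ) : Type := Option (Fin a ⊕ Fin (b - 1))

variable (b x y) in
/-- The element of degree three spanning the socle of the quotient. -/
def socleElement : A := x 1 * y 0 * y (b - 1)

variable (a b x y) in
/-- The half of the basis in degrees zero and one: `1`, `x₁,…,x_a` and `y₁,…,y_{b−1}`. -/
def lowFamily : ReductionIndex a b → A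
  | none => 1
  | some (.inl i) => x (i + 1)
  | some (.inr j) => y (j + 1)

variable (a b x y) in
/-- The half of the basis in degrees three and two, indexed so that it is dual to `lowFamily`:
`x_i` is paired with `x_{a+1−i} y_{b−1}` and `y_j` with `x₁ y_{b−1−j}`. -/
def highFamily : ReductionIndex a b → A
  | none => socleElement b x y
  | some (.inl i) => x (a - i) * y (b - 1)
  | some (.inr j) => x 1 * y (b - 2 - j)

variable (a b x y) in
/-- The monomial basis of the quotient. -/
def basisFamily : ReductionIndex a b ⊕ ReductionIndex a b → A :=
  Sum.elim (lowFamily a b x y) (highFamily a b x y)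

theorem map_lowFamily {B : Type*} [CommRing B] (f : A →+* B) (k : ReductionIndex a b) :
    f (lowFamily a b x y k) = lowFamily a b (f ∘ x) (f ∘ y) k := by
  rcases k with _ | i | j <;> simp [lowFamily]

theorem map_highFamily {B : Type*} [CommRing B] (f : A →+* B) (k : ReductionIndex a b) :
    f (highFamily a b x y k) = highFamily a b (f ∘ x) (f ∘ y) k := by
  rcases k with _ | i | j <;> simp [highFamily, socleElement]

theorem span_socleElement_le : Submodule.span R {socleElement b x y} ≤
    Submodule.span R (Set.range (basisFamily a b x y)) :=
  Submodule.span_mono (Set.singleton_subset_iff.2 ⟨.inr none, rfl⟩)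

namespace ReductionRelations

theorem x_mul_x_eq_zero (h : ReductionRelations a b e1 e2 x y) {i j : ℕ} (hij : i + j ≤ a) :
    x i * x j = 0 := by
  rw [mul_eq_mul_of_minors h.x_minor (k := 0) (l := i + j) (by omega) (by omega) (by omega)
    (by omega) (by omega), h.x_zero, zero_mul]

theorem y_mul_y_eq_zero (h : ReductionRelations a b e1 e2 x y) {i j : ℕ} (hi : i ≤ b)
    (hj : j ≤ b) (hij : b ≤ i + j) : y i * y j = 0 := by
  rw [mul_eq_mul_of_minors h.y_minor (k := b) (l := i + j - b) (by omega) (by omega) (by omega)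
    (by omega) (by omega), h.y_last, zero_mul]

theorem x_mul_x (h : ReductionRelations a b e1 e2 x y) {i j : ℕ} (hi : i ≤ a) (hj : j ≤ a)
    (hij : a ≤ i + j) : x i * x j = x (i + j - a) * y 0 := by
  rw [← h.x_last]
  exact mul_eq_mul_of_minors h.x_minor (by omega) hi hj (by omega) le_rfl

theorem y_mul_y (h : ReductionRelations a b e1 e2 x y) {i j : ℕ} (hij : i + j ≤ b) :
    y i * y j = y 0 * y (i + j) :=
  mul_eq_mul_of_minors h.y_minor (by omega) (by omega) (by omega) (by omega) (by omega)

theorem x_one_mul_y_zero_mul_y_eq_zero (h : ReductionRelations a b e1 e2 x y) (ha : 2 ≤ a)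
    {j : ℕ} (hj : j + 2 ≤ b) : x 1 * y 0 * y j = 0 := by
  obtain ⟨a, rfl⟩ := Nat.exists_eq_add_of_le' ha
  calc x 1 * y 0 * y j = x 1 * (x (a + 2) * y j) := by rw [h.x_last, mul_assoc]
    _ = e1 • (x 1 * x (a + 1) * y (j + 1)) - e2 • (x 1 * x a * y (j + 2)) := by
      rw [h.bilinear a j le_rfl hj, mul_sub, mul_smul_comm, mul_smul_comm, mul_assoc, mul_assoc]
    _ = 0 := by
      rw [h.x_mul_x_eq_zero (by omega), h.x_mul_x_eq_zero (by omega)]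
      simp only [zero_mul, smul_zero, sub_zero]

theorem x_mul_y_zero_mul_y_last_eq_zero (h : ReductionRelations a b e1 e2 x y) (hb : 2 ≤ b)
    {i : ℕ} (hi : i + 2 ≤ a) : x (i + 2) * y 0 * y (b - 1) = 0 := by
  obtain ⟨b, rfl⟩ := Nat.exists_eq_add_of_le' hb
  calc x (i + 2) * y 0 * y (b + 1) = x (i + 2) * y b * y 1 := by
        rw [mul_assoc, ← h.y_mul_y (i := b) (by omega), mul_assoc]
    _ = e1 • (x (i + 1) * (y (b + 1) * y 1)) - e2 • (x i * (y (b + 2) * y 1)) := by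
      rw [h.bilinear i b hi le_rfl, sub_mul, smul_mul_assoc, smul_mul_assoc, mul_assoc, mul_assoc]
    _ = 0 := by
      rw [h.y_last, h.y_mul_y_eq_zero (by omega) (by omega) (by omega)]
      simp only [zero_mul, mul_zero, smul_zero, sub_zero]

theorem x_mul_y_zero_mul_y_mem (h : ReductionRelations a b e1 e2 x y) (ha : 2 ≤ a) (hb : 2 ≤ b)
    {i j : ℕ} (hi : i ≤ a) (hj : j ≤ b) :
    x i * y 0 * y j ∈ Submodule.span R {socleElement b x y} := by
  refine mem_of_diagonal_recurrence (f := fun i j => x i * y 0 * y j) (e1 := e1) (e2 := e2)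
    (fun i j hi hj => ?_) (fun i j hi hj hij => ?_) hi hj
  · simp only [mul_right_comm _ (y 0), h.bilinear i j hi hj, sub_mul, smul_mul_assoc]
  rcases hj.eq_or_lt with rfl | hj
  · rw [h.y_last, mul_zero]; exact zero_mem _
  match i, hij with
  | 0, _ => rw [h.x_zero, zero_mul, zero_mul]; exact zero_mem _
  | 1, _ =>
    rcases Nat.lt_or_ge j (b - 1) with hj' | hj'
    · rw [h.x_one_mul_y_zero_mul_y_eq_zero ha (by omega)]; exact zero_mem _
    · rw [show j = b - 1 by omega]; exact Submodule.mem_span_singleton_self _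
  | i + 2, hij =>
    rw [show j = b - 1 by omega, h.x_mul_y_zero_mul_y_last_eq_zero hb hi]
    exact zero_mem _

theorem x_mul_y_mul_y_mem (h : ReductionRelations a b e1 e2 x y) (ha : 2 ≤ a) (hb : 2 ≤ b)
    {i j k : ℕ} (hi : i ≤ a) (hj : j ≤ b) (hk : k ≤ b) :
    x i * y j * y k ∈ Submodule.span R {socleElement b x y} := by
  rw [mul_assoc]
  rcases le_total (j + k) b with hjk | hjk
  · rw [h.y_mul_y hjk, ← mul_assoc]
    exact h.x_mul_y_zero_mul_y_mem ha hb hi hjk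
  · rw [h.y_mul_y_eq_zero hj hk hjk, mul_zero]; exact zero_mem _

theorem x_mul_y_mul_x_mem (h : ReductionRelations a b e1 e2 x y) (ha : 2 ≤ a) (hb : 2 ≤ b)
    {i j k : ℕ} (hi : i ≤ a) (hj : j ≤ b) (hk : k ≤ a) :
    x i * y j * x k ∈ Submodule.span R {socleElement b x y} := by
  rw [mul_right_comm]
  rcases le_total (i + k) a with hik | hik
  · rw [h.x_mul_x_eq_zero hik, zero_mul]; exact zero_mem _
  · rw [h.x_mul_x hi hk hik]
    exact h.x_mul_y_zero_mul_y_mem ha hb (by omega) hj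

theorem socleElement_mul_y (h : ReductionRelations a b e1 e2 x y) (ha : 2 ≤ a) (hb : 2 ≤ b)
    {j : ℕ} (hj : j ≤ b) : socleElement b x y * y j = 0 := by
  rcases j.eq_zero_or_pos with rfl | hj0
  · have hlast := h.x_mul_y_zero_mul_y_last_eq_zero hb (i := a - 2) (by omega)
    rw [Nat.sub_add_cancel ha, h.x_last] at hlast
    calc socleElement b x y * y 0 = x 1 * (y 0 * y 0 * y (b - 1)) := by
          rw [socleElement]; ring
      _ = 0 := by rw [hlast, mul_zero]
  · rw [socleElement, mul_assoc, h.y_mul_y_eq_zero (by omega) hj (by omega), mul_zero]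

theorem socleElement_mul_x (h : ReductionRelations a b e1 e2 x y) (ha : 2 ≤ a) (hb : 2 ≤ b)
    {i : ℕ} (hi : i ≤ a) : socleElement b x y * x i = 0 := by
  rcases hi.eq_or_lt with rfl | hi
  · rw [h.x_last]; exact h.socleElement_mul_y ha hb (Nat.zero_le b)
  · calc socleElement b x y * x i = x 1 * x i * (y 0 * y (b - 1)) := by rw [socleElement]; ring
      _ = 0 := by rw [h.x_mul_x_eq_zero (by omega), zero_mul]

theorem x_mem_span (h : ReductionRelations a b e1 e2 x y) {i : ℕ} (hi : i ≤ a) :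
    x i ∈ Submodule.span R (Set.range (basisFamily a b x y)) := by
  rcases i with _ | i
  · rw [h.x_zero]; exact zero_mem _
  · exact Submodule.subset_span ⟨.inl (some (.inl ⟨i, hi⟩)), rfl⟩

theorem y_mem_span (h : ReductionRelations a b e1 e2 x y) {j : ℕ} (hj : j ≤ b) :
    y j ∈ Submodule.span R (Set.range (basisFamily a b x y)) := by
  rcases hj.eq_or_lt with rfl | hj
  · rw [h.y_last]; exact zero_mem _
  rcases j with _ | j
  · rw [← h.x_last]; exact h.x_mem_span le_rfl
  · exact Submodule.subset_span ⟨.inl (some (.inr ⟨j, by omega⟩)), rfl⟩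

theorem x_mul_y_mem_span (h : ReductionRelations a b e1 e2 x y) {i j : ℕ}
    (hi : i ≤ a) (hj : j ≤ b) :
    x i * y j ∈ Submodule.span R (Set.range (basisFamily a b x y)) := by
  have mem_last : ∀ i ≤ a,
      x i * y (b - 1) ∈ Submodule.span R (Set.range (basisFamily a b x y)) := by
    intro i hi
    rcases i.eq_zero_or_pos with rfl | hi0
    · rw [h.x_zero, zero_mul]; exact zero_mem _
    · refine Submodule.subset_span ⟨.inr (some (.inl ⟨a - i, by omega⟩)), ?_⟩
      simp only [basisFamily, Sum.elim_inr, highFamily, Nat.sub_sub_self hi]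
  refine mem_of_diagonal_recurrence (f := fun i j => x i * y j) h.bilinear
    (fun i j hi hj hij => ?_) hi hj
  rcases hj.eq_or_lt with rfl | hj
  · rw [h.y_last, mul_zero]; exact zero_mem _
  rcases (Nat.le_sub_one_of_lt hj).eq_or_lt with rfl | hj'
  · exact mem_last i hi
  obtain rfl | rfl : i = 0 ∨ i = 1 := by omega
  · rw [h.x_zero, zero_mul]; exact zero_mem _
  · refine Submodule.subset_span ⟨.inr (some (.inr ⟨b - 2 - j, by omega⟩)), ?_⟩
    simp only [basisFamily, Sum.elim_inr, highFamily, Nat.sub_sub_self (show j ≤ b - 2 by omega)]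

theorem x_mul_x_mem_span (h : ReductionRelations a b e1 e2 x y) {i j : ℕ}
    (hi : i ≤ a) (hj : j ≤ a) :
    x i * x j ∈ Submodule.span R (Set.range (basisFamily a b x y)) := by
  rcases le_total (i + j) a with hij | hij
  · rw [h.x_mul_x_eq_zero hij]; exact zero_mem _
  · rw [h.x_mul_x hi hj hij]
    exact h.x_mul_y_mem_span (by omega) (Nat.zero_le b)

theorem y_mul_y_mem_span (h : ReductionRelations a b e1 e2 x y) {i j : ℕ}
    (hi : i ≤ b) (hj : j ≤ b) :
    y i * y j ∈ Submodule.span R (Set.range (basisFamily a b x y)) := by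
  rcases le_total (i + j) b with hij | hij
  · rw [h.y_mul_y hij, ← h.x_last]
    exact h.x_mul_y_mem_span le_rfl hij
  · rw [h.y_mul_y_eq_zero hi hj hij]; exact zero_mem _

theorem basisFamily_mul_x_mem_span (h : ReductionRelations a b e1 e2 x y) (ha : 2 ≤ a)
    (hb : 2 ≤ b) (k : ReductionIndex a b ⊕ ReductionIndex a b) {i : ℕ} (hi : i ≤ a) :
    basisFamily a b x y k * x i ∈ Submodule.span R (Set.range (basisFamily a b x y)) := by
  rcases k with (_ | k | k) | (_ | k | k) <;>
    simp only [basisFamily, Sum.elim_inl, Sum.elim_inr, lowFamily, highFamily]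
  · rw [one_mul]; exact h.x_mem_span hi
  · exact h.x_mul_x_mem_span (by omega) hi
  · rw [mul_comm]; exact h.x_mul_y_mem_span hi (by omega)
  · rw [h.socleElement_mul_x ha hb hi]; exact zero_mem _
  · exact span_socleElement_le (h.x_mul_y_mul_x_mem ha hb (by omega) (by omega) hi)
  · exact span_socleElement_le (h.x_mul_y_mul_x_mem ha hb (by omega) (by omega) hi)

theorem basisFamily_mul_y_mem_span (h : ReductionRelations a b e1 e2 x y) (ha : 2 ≤ a)
    (hb : 2 ≤ b) (k : ReductionIndex a b ⊕ ReductionIndex a b) {j : ℕ} (hj : j ≤ b) :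
    basisFamily a b x y k * y j ∈ Submodule.span R (Set.range (basisFamily a b x y)) := by
  rcases k with (_ | k | k) | (_ | k | k) <;>
    simp only [basisFamily, Sum.elim_inl, Sum.elim_inr, lowFamily, highFamily]
  · rw [one_mul]; exact h.y_mem_span hj
  · exact h.x_mul_y_mem_span (by omega) hj
  · exact h.y_mul_y_mem_span (by omega) hj
  · rw [h.socleElement_mul_y ha hb hj]; exact zero_mem _
  · exact span_socleElement_le (h.x_mul_y_mul_y_mem ha hb (by omega) (by omega) hj)
  · exact span_socleElement_le (h.x_mul_y_mul_y_mem ha hb (by omega) (by omega) hj)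

theorem span_basisFamily_eq_top (h : ReductionRelations a b e1 e2 x y) (ha : 2 ≤ a) (hb : 2 ≤ b)
    (hA : Algebra.adjoin R (x '' Set.Iic a ∪ y '' Set.Iic b) = ⊤) :
    Submodule.span R (Set.range (basisFamily a b x y)) = ⊤ := by
  refine span_eq_top_of_mul_mem hA (Submodule.subset_span ⟨.inl none, rfl⟩) ?_
  rintro _ ⟨k, rfl⟩ _ (⟨i, hi, rfl⟩ | ⟨j, hj, rfl⟩)
  · exact h.basisFamily_mul_x_mem_span ha hb k hi
  · exact h.basisFamily_mul_y_mem_span ha hb k hj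

end ReductionRelations

end Relations

section SocleFunctional

variable {R : Type*} [CommRing R] {a b : ℕ} {e1 e2 : R}

/-- The Lucas sequence of the first kind with parameters `e₁, e₂`. For `e₁ = t₁ + t₂` and
`e₂ = t₁t₂` its `n`-th term is `(t₁ⁿ − t₂ⁿ)/(t₁ − t₂)` where this makes sense. -/
def lucasSeq (e1 e2 : R) : ℕ → R
  | 0 => 0
  | 1 => 1
  | n + 2 => e1 * lucasSeq e1 e2 (n + 1) - e2 * lucasSeq e1 e2 n

variable (a b) in
/-- The exponents of the parametrization `x_i ↦ z uⁱ v^{a−i}`, `y_j ↦ z u^{a+j}` of the variables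
by monomials in `z, u, v`. -/
def toricExponent : Fin (a + 1) ⊕ Fin (b + 1) → ℕ × ℕ × ℕ :=
  Sum.elim (fun i => (1, i, a - i)) (fun j => (1, a + j, 0))

variable (R a b) in
/-- The algebra homomorphism `x_i ↦ z uⁱ v^{a−i}`, `y_j ↦ z u^{a+j}`; the monomial algebra of
`ℕ × ℕ × ℕ` plays the role of `R[z, u, v]`. -/
def toricHom : KPoly R a b →ₐ[R] AddMonoidAlgebra R (ℕ × ℕ × ℕ) :=
  aeval fun s => .single (toricExponent a b s) 1

variable (a b e1 e2) in
/-- The linear functional taking `z³ u^{2a+b} vᵏ` to the Lucas number with index `a − k` (which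
is `0` for `k ≥ a`, by truncated subtraction), and all other monomials to `0`. -/
def lucasFunctional : AddMonoidAlgebra R (ℕ × ℕ × ℕ) →ₗ[R] R :=
  Finsupp.linearCombination R (fun t : ℕ × ℕ × ℕ =>
    if t.1 = 3 ∧ t.2.1 = 2 * a + b then lucasSeq e1 e2 (a - t.2.2) else 0) ∘ₗ
    (AddMonoidAlgebra.coeffLinearEquiv R).toLinearMap

variable (a b e1 e2) in
/-- The Macaulay dual generator of the quotient, as a functional on the polynomial ring. -/
def socleFunctional : KPoly R a b →ₗ[R] R :=
  lucasFunctional a b e1 e2 ∘ₗ (toricHom R a b).toLinearMap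

theorem lucasFunctional_single (d w k : ℕ) :
    lucasFunctional a b e1 e2 (.single (d, w, k) 1) =
      if d = 3 ∧ w = 2 * a + b then lucasSeq e1 e2 (a - k) else 0 := by
  simp [lucasFunctional]

theorem toricHom_xv (i : Fin (a + 1)) :
    toricHom R a b (xv R a b i) = .single (1, (i : ℕ), a - i) 1 :=
  aeval_X _ _

theorem toricHom_yv (j : Fin (b + 1)) :
    toricHom R a b (yv R a b j) = .single (1, a + j, 0) 1 :=
  aeval_X _ _

theorem toricHom_monomial (m : Fin (a + 1) ⊕ Fin (b + 1) →₀ ℕ) :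
    toricHom R a b (monomial m 1) = .single (Finsupp.weight (toricExponent a b) m) 1 := by
  induction m using Finsupp.induction_linear with
  | zero => rw [map_zero]; exact map_one _
  | add m m' hm hm' =>
    rw [← one_mul (1 : R), ← monomial_mul, map_mul, hm, hm', AddMonoidAlgebra.single_mul_single,
      map_add]
  | single s n =>
    simp [toricHom, aeval_monomial, Finsupp.weight_single, AddMonoidAlgebra.single_pow]

theorem socleFunctional_monomial_mul (m : Fin (a + 1) ⊕ Fin (b + 1) →₀ ℕ) (g : KPoly R a b) :
    socleFunctional a b e1 e2 (monomial m 1 * g) = lucasFunctional a b e1 e2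
      (.single (Finsupp.weight (toricExponent a b) m) 1 * toricHom R a b g) := by
  rw [← toricHom_monomial, ← map_mul]
  rfl

theorem toricExponent_fst (s : Fin (a + 1) ⊕ Fin (b + 1)) : (toricExponent a b s).1 = 1 := by
  rcases s with i | j <;> rfl

theorem mul_le_weight_toricExponent (m : Fin (a + 1) ⊕ Fin (b + 1) →₀ ℕ) :
    a * (Finsupp.weight (toricExponent a b) m).1 ≤
      (Finsupp.weight (toricExponent a b) m).2.1 + (Finsupp.weight (toricExponent a b) m).2.2 := by
  induction m using Finsupp.induction_linear with
  | zero => simp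
  | add m m' hm hm' => simp only [map_add, Prod.fst_add, Prod.snd_add, mul_add]; omega
  | single s n =>
    have h : a ≤ (toricExponent a b s).2.1 + (toricExponent a b s).2.2 := by
      rcases s with i | j <;> simp only [toricExponent, Sum.elim_inl, Sum.elim_inr] <;> omega
    simpa only [Finsupp.weight_single, Prod.smul_fst, Prod.smul_snd, smul_eq_mul,
      toricExponent_fst, mul_one, mul_comm a, ← mul_add] using Nat.mul_le_mul_left n h

theorem weight_toricExponent_le_of_fst_eq_one {m : Fin (a + 1) ⊕ Fin (b + 1) →₀ ℕ} {i : ℕ}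
    (hm : (Finsupp.weight (toricExponent a b) m).1 = 1)
    (hi : a ≤ (Finsupp.weight (toricExponent a b) m).2.1 + i) :
    (Finsupp.weight (toricExponent a b) m).2.2 ≤ i := by
  have hsum : m.sum (fun _ n => n) = (Finsupp.weight (toricExponent a b) m).1 := by
    rw [Finsupp.weight_apply, Finsupp.sum, Finsupp.sum, Prod.fst_sum]
    simp only [Prod.smul_fst, toricExponent_fst, smul_eq_mul, mul_one]
  obtain ⟨s, rfl⟩ := (Finsupp.sum_eq_one_iff m).1 (hsum.trans hm)
  rcases s with k | k <;>
    simp only [Finsupp.weight_single, one_smul, toricExponent, Sum.elim_inl, Sum.elim_inr]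
      at hi ⊢ <;> omega

theorem I2MX_le_ker_toricHom : I2MX R a b ≤ RingHom.ker (toricHom R a b) := by
  refine Ideal.span_le.2 ?_
  rintro _ ⟨c, c', rfl⟩
  simp only [SetLike.mem_coe, RingHom.mem_ker, map_sub, map_mul, toricHom_xv,
    AddMonoidAlgebra.single_mul_single, sub_eq_zero, Prod.mk_add_mk, Fin.val_castSucc,
    Fin.val_succ]
  congr 3 <;> omega

theorem I2MY_le_ker_toricHom : I2MY R a b ≤ RingHom.ker (toricHom R a b) := by
  refine Ideal.span_le.2 ?_
  rintro _ ⟨c, c', rfl⟩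
  simp only [SetLike.mem_coe, RingHom.mem_ker, map_sub, map_mul, toricHom_yv,
    AddMonoidAlgebra.single_mul_single, sub_eq_zero, Prod.mk_add_mk, Fin.val_castSucc,
    Fin.val_succ]
  congr 3
  omega

theorem xv_last_sub_yv_zero_mem_ker_toricHom :
    xv R a b ⟨a, by omega⟩ - yv R a b ⟨0, by omega⟩ ∈ RingHom.ker (toricHom R a b) := by
  rw [RingHom.mem_ker, map_sub, toricHom_xv, toricHom_yv]
  simp only [Nat.sub_self, Nat.add_zero, sub_self]

theorem Je_le_kernelIdeal : Je R a b e1 e2 ≤ kernelIdeal (socleFunctional a b e1 e2) := by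
  refine Ideal.span_le.2 ?_
  rintro _ ⟨i, j, hi, hj, rfl⟩
  refine mem_kernelIdeal_of_monomial fun m => ?_
  have hm := weight_toricExponent_le_of_fst_eq_one (m := m) (i := i)
  rw [socleFunctional_monomial_mul]
  generalize Finsupp.weight (toricExponent a b) m = t at hm ⊢
  obtain ⟨d, w, k⟩ := t
  dsimp only at hm
  -- A contributing `m` has degree one, and then the bound `hm` on its `v`-exponent ensures that
  -- none of the three Lucas indices is truncated, so that the Lucas recurrence applies.
  simp only [← smul_eq_C_mul, map_add, map_sub, map_smul, map_mul, toricHom_xv, toricHom_yv,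
    AddMonoidAlgebra.single_mul_single, mul_add, mul_sub, mul_smul_comm, mul_one,
    Prod.mk_add_mk, lucasFunctional_single, smul_eq_mul]
  by_cases h : d = 1 ∧ w + (a + i + j + 2) = 2 * a + b
  · obtain ⟨n, rfl⟩ : ∃ n, i = k + n := Nat.exists_eq_add_of_le (hm h.1 (by omega))
    rw [if_pos (by omega), if_pos (by omega), if_pos (by omega),
      show a - (k + (a - (k + n + 2) + 0)) = n + 2 by omega,
      show a - (k + (a - (k + n + 1) + 0)) = n + 1 by omega,
      show a - (k + (a - (k + n) + 0)) = n by omega, lucasSeq]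
    ring
  · rw [if_neg (by omega), if_neg (by omega), if_neg (by omega)]
    ring

theorem xv_zero_mem_kernelIdeal :
    xv R a b ⟨0, by omega⟩ ∈ kernelIdeal (socleFunctional a b e1 e2) := by
  refine mem_kernelIdeal_of_monomial fun m => ?_
  rw [socleFunctional_monomial_mul]
  obtain ⟨d, w, k⟩ := Finsupp.weight (toricExponent a b) m
  rw [toricHom_xv, AddMonoidAlgebra.single_mul_single, mul_one, Prod.mk_add_mk, Prod.mk_add_mk,
    lucasFunctional_single, show a - (k + (a - 0)) = 0 by omega, lucasSeq, ite_self]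

theorem yv_last_mem_kernelIdeal :
    yv R a b ⟨b, by omega⟩ ∈ kernelIdeal (socleFunctional a b e1 e2) := by
  refine mem_kernelIdeal_of_monomial fun m => ?_
  have hm := mul_le_weight_toricExponent m
  rw [socleFunctional_monomial_mul]
  generalize Finsupp.weight (toricExponent a b) m = t at hm ⊢
  obtain ⟨d, w, k⟩ := t
  dsimp only at hm
  rw [toricHom_yv, AddMonoidAlgebra.single_mul_single, mul_one, Prod.mk_add_mk, Prod.mk_add_mk,
    lucasFunctional_single, add_zero]
  split_ifs with h
  · -- A contributing `m` has degree two and `u`-exponent `a`, so its `v`-exponent is at least `a`.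
    dsimp only at h
    obtain rfl : d = 2 := by omega
    rw [show a - k = 0 by omega, lucasSeq]
  · rfl

end SocleFunctional

section Quotient

variable {R : Type*} [CommRing R] {a b : ℕ} {e1 e2 : R}

variable (a b e1 e2) in
/-- The ideal `I_e + (x₀, x_a − y₀, y_b)`, for arbitrary coefficients `e₁, e₂`. -/
def reductionIdeal : Ideal (KPoly R a b) :=
  I2MX R a b + I2MY R a b + Je R a b e1 e2
    + Ideal.span {xv R a b ⟨0, by omega⟩, xv R a b ⟨a, by omega⟩ - yv R a b ⟨0, by omega⟩,
        yv R a b ⟨b, by omega⟩}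

theorem reductionIdeal_le_kernelIdeal :
    reductionIdeal a b e1 e2 ≤ kernelIdeal (socleFunctional a b e1 e2) := by
  refine sup_le (sup_le (sup_le ?_ ?_) Je_le_kernelIdeal) (Ideal.span_le.2 ?_)
  · exact I2MX_le_ker_toricHom.trans (ker_le_kernelIdeal_comp _ _)
  · exact I2MY_le_ker_toricHom.trans (ker_le_kernelIdeal_comp _ _)
  · rintro _ (rfl | rfl | rfl)
    · exact xv_zero_mem_kernelIdeal
    · exact ker_le_kernelIdeal_comp _ _ xv_last_sub_yv_zero_mem_ker_toricHom
    · exact yv_last_mem_kernelIdeal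

variable (R a b) in
/-- The variables `x_i` as a sequence on `ℕ`; the terms with `i > a` are not meaningful. -/
def xSeq (i : ℕ) : KPoly R a b := xv R a b (Fin.ofNat (a + 1) i)

variable (R a b) in
/-- The variables `y_j` as a sequence on `ℕ`; the terms with `j > b` are not meaningful. -/
def ySeq (j : ℕ) : KPoly R a b := yv R a b (Fin.ofNat (b + 1) j)

theorem xSeq_eq_xv {i : ℕ} (hi : i < a + 1) : xSeq R a b i = xv R a b ⟨i, hi⟩ :=
  congrArg (xv R a b) (Fin.ext (Nat.mod_eq_of_lt hi))

theorem ySeq_eq_yv {j : ℕ} (hj : j < b + 1) : ySeq R a b j = yv R a b ⟨j, hj⟩ :=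
  congrArg (yv R a b) (Fin.ext (Nat.mod_eq_of_lt hj))

theorem toricHom_xSeq {i : ℕ} (hi : i ≤ a) :
    toricHom R a b (xSeq R a b i) = .single (1, i, a - i) 1 := by
  rw [xSeq_eq_xv (by omega), toricHom_xv]

theorem toricHom_ySeq {j : ℕ} (hj : j ≤ b) :
    toricHom R a b (ySeq R a b j) = .single (1, a + j, 0) 1 := by
  rw [ySeq_eq_yv (by omega), toricHom_yv]

/-- The exponent of the image of a member of `lowFamily` under `toricHom`. -/
def lowExponent : ReductionIndex a b → ℕ × ℕ × ℕ
  | none => 0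
  | some (.inl i) => (1, i + 1, a - (i + 1))
  | some (.inr j) => (1, a + (j + 1), 0)

/-- The exponent of the image of a member of `highFamily` under `toricHom`. -/
def highExponent : ReductionIndex a b → ℕ × ℕ × ℕ
  | none => (3, 2 * a + b, a - 1)
  | some (.inl i) => (2, 2 * a + b - (i + 1), i)
  | some (.inr j) => (2, a + b - (j + 1), a - 1)

theorem lowExponent_add_highExponent (ha : 1 ≤ a) (hb : 2 ≤ b) (k : ReductionIndex a b) :
    lowExponent k + highExponent k = (3, 2 * a + b, a - 1) := by
  rcases k with _ | k | k <;>
    simp only [lowExponent, highExponent, zero_add, Prod.mk_add_mk, Prod.mk.injEq, true_and,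
      and_true] <;>
    omega

theorem eq_of_lowExponent_add_highExponent {k l : ReductionIndex a b}
    (hdeg : (lowExponent k + highExponent l).1 = 3)
    (hweight : (lowExponent k + highExponent l).2.1 = 2 * a + b) : k = l := by
  rcases k with _ | k | k <;> rcases l with _ | l | l <;>
    simp only [lowExponent, highExponent, zero_add, Prod.mk_add_mk, Option.some.injEq,
      Sum.inl.injEq, Sum.inr.injEq, Fin.ext_iff, reduceCtorEq] at hdeg hweight ⊢ <;> omega

theorem toricHom_lowFamily (k : ReductionIndex a b) :
    toricHom R a b (lowFamily a b (xSeq R a b) (ySeq R a b) k) = .single (lowExponent k) 1 := by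
  rcases k with _ | i | j
  · exact map_one _
  · exact toricHom_xSeq (by omega)
  · exact toricHom_ySeq (by omega)

theorem toricHom_highFamily (ha : 1 ≤ a) (hb : 2 ≤ b) (k : ReductionIndex a b) :
    toricHom R a b (highFamily a b (xSeq R a b) (ySeq R a b) k) = .single (highExponent k) 1 := by
  rcases k with _ | i | j <;>
    simp only [highFamily, socleElement, highExponent, map_mul, AddMonoidAlgebra.single_mul_single,
      toricHom_xSeq ha, toricHom_xSeq (Nat.sub_le a _), toricHom_ySeq (Nat.zero_le b),
      toricHom_ySeq (Nat.sub_le b 1), Prod.mk_add_mk, mul_one]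
  · congr 3; omega
  · congr 3 <;> omega
  · rw [toricHom_ySeq (by omega), AddMonoidAlgebra.single_mul_single, Prod.mk_add_mk,
      Prod.mk_add_mk, mul_one]
    congr 3; omega

theorem socleFunctional_mul_of_single {p q : KPoly R a b} {s t : ℕ × ℕ × ℕ}
    (hp : toricHom R a b p = .single s 1) (hq : toricHom R a b q = .single t 1) :
    socleFunctional a b e1 e2 (p * q) =
      if (s + t).1 = 3 ∧ (s + t).2.1 = 2 * a + b
        then lucasSeq e1 e2 (a - (s + t).2.2) else 0 := by
  rw [socleFunctional, LinearMap.comp_apply, AlgHom.toLinearMap_apply, map_mul, hp, hq,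
    AddMonoidAlgebra.single_mul_single, mul_one]
  exact lucasFunctional_single _ _ _

theorem socleFunctional_lowFamily_mul_lowFamily (k l : ReductionIndex a b) :
    socleFunctional a b e1 e2 (lowFamily a b (xSeq R a b) (ySeq R a b) k *
      lowFamily a b (xSeq R a b) (ySeq R a b) l) = 0 := by
  rw [socleFunctional_mul_of_single (toricHom_lowFamily k) (toricHom_lowFamily l)]
  rcases k with _ | k | k <;> rcases l with _ | l | l <;> simp [lowExponent]

theorem socleFunctional_highFamily_mul_highFamily (ha : 1 ≤ a) (hb : 2 ≤ b)
    (k l : ReductionIndex a b) :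
    socleFunctional a b e1 e2 (highFamily a b (xSeq R a b) (ySeq R a b) k *
      highFamily a b (xSeq R a b) (ySeq R a b) l) = 0 := by
  rw [socleFunctional_mul_of_single (toricHom_highFamily ha hb k) (toricHom_highFamily ha hb l)]
  rcases k with _ | k | k <;> rcases l with _ | l | l <;> simp [highExponent]

theorem socleFunctional_lowFamily_mul_highFamily (ha : 1 ≤ a) (hb : 2 ≤ b)
    (k l : ReductionIndex a b) :
    socleFunctional a b e1 e2 (lowFamily a b (xSeq R a b) (ySeq R a b) k *
      highFamily a b (xSeq R a b) (ySeq R a b) l) = if k = l then 1 else 0 := by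
  rw [socleFunctional_mul_of_single (toricHom_lowFamily k) (toricHom_highFamily ha hb l)]
  rcases eq_or_ne k l with rfl | hkl
  · simp only [lowExponent_add_highExponent ha hb, and_self, if_true, Nat.sub_sub_self ha,
      lucasSeq]
  · rw [if_neg fun h => hkl (eq_of_lowExponent_add_highExponent h.1 h.2), if_neg hkl]

variable (a b e1 e2) in
theorem reductionRelations_quotient :
    ReductionRelations a b e1 e2 (Ideal.Quotient.mk (reductionIdeal a b e1 e2) ∘ xSeq R a b)
      (Ideal.Quotient.mk (reductionIdeal a b e1 e2) ∘ ySeq R a b) where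
  x_minor i j hi hj := by
    refine Ideal.Quotient.eq.2 (Ideal.mem_sup_left (Ideal.mem_sup_left (Ideal.mem_sup_left
      (Ideal.subset_span ⟨⟨i, hi⟩, ⟨j, hj⟩, ?_⟩))))
    simp only [xSeq_eq_xv, hi, hj, Nat.lt_succ_of_lt, Nat.succ_lt_succ]
    rfl
  y_minor i j hi hj := by
    refine Ideal.Quotient.eq.2 (Ideal.mem_sup_left (Ideal.mem_sup_left (Ideal.mem_sup_right
      (Ideal.subset_span ⟨⟨i, hi⟩, ⟨j, hj⟩, ?_⟩))))
    simp only [ySeq_eq_yv, hi, hj, Nat.lt_succ_of_lt, Nat.succ_lt_succ]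
    rfl
  bilinear i j hi hj := by
    refine Ideal.Quotient.eq.2 (Ideal.mem_sup_left (Ideal.mem_sup_right
      (Ideal.subset_span ⟨i, j, hi, hj, ?_⟩)))
    rw [xSeq_eq_xv (by omega), xSeq_eq_xv (by omega), xSeq_eq_xv (by omega),
      ySeq_eq_yv (by omega), ySeq_eq_yv (by omega), ySeq_eq_yv (by omega)]
    simp only [smul_eq_C_mul]
    ring
  x_zero := Ideal.Quotient.eq_zero_iff_mem.2 (Ideal.mem_sup_right
    (Ideal.subset_span (.inl (xSeq_eq_xv _))))
  y_last := Ideal.Quotient.eq_zero_iff_mem.2 (Ideal.mem_sup_right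
    (Ideal.subset_span (.inr (.inr (ySeq_eq_yv _)))))
  x_last := Ideal.Quotient.eq.2 (Ideal.mem_sup_right
    (Ideal.subset_span (.inr (.inl (congrArg₂ _ (xSeq_eq_xv _) (ySeq_eq_yv _))))))

theorem adjoin_xSeq_ySeq :
    Algebra.adjoin R (xSeq R a b '' Set.Iic a ∪ ySeq R a b '' Set.Iic b) = ⊤ := by
  rw [eq_top_iff, ← MvPolynomial.adjoin_range_X]
  refine Algebra.adjoin_mono ?_
  rintro _ ⟨i | j, rfl⟩
  · exact .inl ⟨i, Fin.is_le i, xSeq_eq_xv i.isLt⟩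
  · exact .inr ⟨j, Fin.is_le j, ySeq_eq_yv j.isLt⟩

theorem adjoin_mk_xSeq_mk_ySeq (I : Ideal (KPoly R a b)) :
    Algebra.adjoin R ((Ideal.Quotient.mk I ∘ xSeq R a b) '' Set.Iic a ∪
      (Ideal.Quotient.mk I ∘ ySeq R a b) '' Set.Iic b) = ⊤ := by
  rw [Set.image_comp, Set.image_comp, ← Set.image_union]
  calc _ = (Algebra.adjoin R (xSeq R a b '' Set.Iic a ∪ ySeq R a b '' Set.Iic b)).map
        (Ideal.Quotient.mkₐ R I) := (AlgHom.map_adjoin _ _).symm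
    _ = ⊤ := by
      rw [adjoin_xSeq_ySeq, Algebra.map_top, AlgHom.range_eq_top]
      exact Ideal.Quotient.mkₐ_surjective R I

theorem linearIndependent_basisFamily_quotient (ha : 1 ≤ a) (hb : 2 ≤ b) :
    LinearIndependent R (basisFamily a b
      (Ideal.Quotient.mk (reductionIdeal a b e1 e2) ∘ xSeq R a b)
      (Ideal.Quotient.mk (reductionIdeal a b e1 e2) ∘ ySeq R a b)) := by
  refine linearIndependent_sumElim_of_pairing
    (kernelIdealLift (socleFunctional a b e1 e2) _ reductionIdeal_le_kernelIdeal) ?_ ?_ ?_ <;>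
    intro k l <;>
    simp only [← map_lowFamily, ← map_highFamily, ← map_mul, kernelIdealLift_mk]
  · exact socleFunctional_lowFamily_mul_lowFamily k l
  · exact socleFunctional_highFamily_mul_highFamily ha hb k l
  · exact socleFunctional_lowFamily_mul_highFamily ha hb k l

variable (e1 e2) in
/-- The monomial basis `basisFamily` of `P/(I_e + (x₀, x_a − y₀, y_b))`. -/
def reductionBasis (ha : 2 ≤ a) (hb : 2 ≤ b) :
    Module.Basis (ReductionIndex a b ⊕ ReductionIndex a b) R
      (KPoly R a b ⧸ reductionIdeal a b e1 e2) :=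
  .mk (linearIndependent_basisFamily_quotient (one_le_two.trans ha) hb)
    ((reductionRelations_quotient a b e1 e2).span_basisFamily_eq_top ha hb
      (adjoin_mk_xSeq_mk_ySeq _)).ge

end Quotient

theorem stmt8_general (R : Type*) [CommRing R] [Nontrivial R] (a b : ℕ) (ha : 2 ≤ a)
    (hb : 2 ≤ b) (e1 e2 : R) :
    Module.finrank R (KPoly R a b ⧸ reductionIdeal a b e1 e2) = 2 * (a + b) := by
  rw [Module.finrank_eq_card_basis (reductionBasis e1 e2 ha hb)]
  simp only [Fintype.card_sum, Fintype.card_option, Fintype.card_fin]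
  omega

/-- Let `F` be a field, `a ≥ b ≥ 2`, and `t₁, t₂ ∈ F` nonzero
with `e₁ = t₁ + t₂`, `e₂ = t₁t₂`. Then the `F`-vector space
`P/(I_e + (x₀, x_a − y₀, y_b))` has dimension exactly `2(a + b)`. -/
theorem stmt8 (F : Type*) [Field F] (a b : ℕ) (hab : b ≤ a) (hb : 2 ≤ b)
    (t1 t2 : F) (ht1 : t1 ≠ 0) (ht2 : t2 ≠ 0) :
    Module.finrank F
      (KPoly F a b ⧸
        (I2MX F a b + I2MY F a b + Je F a b (t1 + t2) (t1 * t2)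
          + Ideal.span {xv F a b ⟨0, by omega⟩,
              xv F a b ⟨a, by omega⟩ - yv F a b ⟨0, by omega⟩,
              yv F a b ⟨b, by omega⟩}))
      = 2 * (a + b) := by
  exact stmt8_general F a b (hb.trans hab) hb (t1 + t2) (t1 * t2)

end
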